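/- arXiv:2204.02391 — 2 statements merged into one kernel-verified Lean document; each statement's English description precedes it below -/
import Mathlib

section
/- For m, n ≥ 3, the 'pushed' digraph P(C⃗_m □ C⃗_n), obtained from C⃗_m □ C⃗_n by reversing all four edges incident to a chosen vertex v, is hamiltonian if and only if the vertex-deleted digraph (C⃗_m □ C⃗_n) ∖ R_{2,2} is hamiltonian. -/
/-- Edge relation of the Cartesian product `C⃗_m □ C⃗_n` on `ZMod m × ZMod n`. -/
def cpEdge (m n : ℕ) (u v : ZMod m × ZMod n) : Prop :=
  v = u + (1, 0) ∨ v = u + (0, 1)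

/-- Edge relation of the digraph obtained by pushing at the vertex `v₀`:
every edge incident with `v₀` is reversed. -/
def pushedEdge (m n : ℕ) (v₀ u v : ZMod m × ZMod n) : Prop :=
  (cpEdge m n u v ∧ u ≠ v₀ ∧ v ≠ v₀) ∨ (cpEdge m n v u ∧ (u = v₀ ∨ v = v₀))

/-- The rectangle `R_{2,2} = {0,1} × {0,1}`. -/
def R22 (m n : ℕ) : Set (ZMod m × ZMod n) :=
  {v | (v.1 = 0 ∨ v.1 = 1) ∧ (v.2 = 0 ∨ v.2 = 1)}

/-- `E` has a hamiltonian cycle on the vertex set `S`, of length `N`: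
a cyclic sequence of `N` distinct vertices covering `S`, following edges of `E`. -/
def HamOn {V : Type} (E : V → V → Prop) (S : Set V) (N : ℕ) : Prop :=
  ∃ f : ZMod N → V, Function.Injective f ∧ Set.range f = S ∧ ∀ i, E (f i) (f (i + 1))

theorem hamOn_of_seq {V : Type} (E : V → V → Prop) (S : Set V) (M : ℕ) (g : ℕ → V)
    (inj : ∀ i j, i < M + 1 → j < M + 1 → g i = g j → i = j)
    (cover : ∀ x, x ∈ S ↔ ∃ i, i < M + 1 ∧ g i = x)
    (edge : ∀ i, i < M → E (g i) (g (i + 1)))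
    (close : E (g M) (g 0)) : HamOn E S (M + 1) := by
  refine ⟨fun i => g (ZMod.val i), ?_, ?_, ?_⟩
  · intro i j h
    exact ZMod.val_injective _ (inj _ _ (ZMod.val_lt i) (ZMod.val_lt j) h)
  · ext x
    rw [cover]
    constructor
    · rintro ⟨i, rfl⟩
      exact ⟨_, ZMod.val_lt i, rfl⟩
    · rintro ⟨i, hi, rfl⟩
      exact ⟨(i : ZMod (M + 1)), by simp only [ZMod.val_natCast_of_lt hi]⟩
  · intro i
    have hlt := ZMod.val_lt i
    by_cases h : ZMod.val i = M
    · have h1 : i + 1 = 0 := by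
        rw [← ZMod.natCast_zmod_val i, h]
        have := ZMod.natCast_self (M + 1)
        push_cast at this
        exact this
      simp only [h1, h, ZMod.val_zero]
      exact close
    · have h1 : ZMod.val (i + 1) = ZMod.val i + 1 := by
        have h2 : i + 1 = ((ZMod.val i + 1 : ℕ) : ZMod (M + 1)) := by
          push_cast
          rw [ZMod.natCast_zmod_val]
        rw [h2, ZMod.val_natCast_of_lt (by omega), ]
      simp only [h1]
      exact edge _ (by omega)

theorem hamOn_map {V W : Type} (E : V → V → Prop) (E' : W → W → Prop) (S : Set V) (S' : Set W)
    (N : ℕ) (φ : V ≃ W) (hE : ∀ u v, E u v → E' (φ u) (φ v)) (hS : ∀ x, φ x ∈ S' ↔ x ∈ S)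
    (h : HamOn E S N) : HamOn E' S' N := by
  obtain ⟨f, hi, hr, he⟩ := h
  refine ⟨fun i => φ (f i), φ.injective.comp hi, ?_, fun i => hE _ _ (he i)⟩
  ext y
  obtain ⟨x, rfl⟩ := φ.surjective y
  rw [hS, ← hr]
  simp

theorem two_ne (m : ℕ) (hm : 3 ≤ m) : (2 : ZMod m) ≠ 0 ∧ (1 : ZMod m) ≠ 0 ∧ (2 : ZMod m) ≠ 1 := by
  refine ⟨?_, ?_⟩
  · have := (ZMod.natCast_eq_zero_iff 2 m).not.2 (fun h => by have := Nat.le_of_dvd (by omega) h; omega)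
    simpa using this
  · have h1 : (1 : ZMod m) ≠ 0 := by
      have := (ZMod.natCast_eq_zero_iff 1 m).not.2
        (fun h => by have := Nat.le_of_dvd (by omega) h; omega)
      simpa using this
    exact ⟨h1, fun h => h1 (by linear_combination h)⟩

theorem caseA (m n M : ℕ) (hm : 3 ≤ m) (hn : 3 ≤ n) (f : ZMod (M + 5) → ZMod m × ZMod n)
    (hi : Function.Injective f) (hr : Set.range f = Set.univ)
    (he : ∀ i, pushedEdge m n (1, 1) (f i) (f (i + 1)))
    (i : ZMod (M + 5)) (h0 : f i = (1, 1)) (h1 : f (i + 1) = (1, 0)) :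
    HamOn (fun u v => cpEdge m n u v ∧ u ∉ R22 m n ∧ v ∉ R22 m n)
        (R22 m n)ᶜ (M + 1) := by
  obtain ⟨m2, m1, m3⟩ := two_ne m hm
  obtain ⟨n2, n1, n3⟩ := two_ne n hn
  have sur : ∀ x, ∃ j, f j = x := fun x => by
    have : x ∈ Set.range f := by rw [hr]; trivial
    exact this
  have he' : ∀ j k, k = j + 1 → pushedEdge m n (1, 1) (f j) (f k) := by
    rintro j k rfl
    exact he j
  have h5 : (M : ZMod (M + 5)) = -5 := by
    have := ZMod.natCast_self (M + 5)
    push_cast at this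
    linear_combination this
  have h4 : (4 : ZMod (M + 5)) ≠ 0 := by
    have := (ZMod.natCast_eq_zero_iff 4 (M + 5)).not.2
      (fun h => by have := Nat.le_of_dvd (by omega) h; omega)
    simpa using this
  have h2 : f (i + 2) = (2, 0) := by
    have := he' (i + 1) (i + 2) (by ring)
    rw [h1] at this
    generalize f (i + 2) = x at *
    obtain ⟨a, b⟩ := x
    simp only [pushedEdge, cpEdge, Prod.mk_add_mk, Prod.mk.injEq, ne_eq] at this ⊢
    clear * - m1 m2 m3 n1 n2 n3 this
    grind
  have h3 : f (i + 3) = (2, 1) := by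
    obtain ⟨j, hj⟩ := sur (2, 1)
    have := he' (j - 1) j (by ring)
    have h : f (j - 1) = (2, 0) := by
      rw [hj] at this
      generalize f (j - 1) = x at *
      obtain ⟨a, b⟩ := x
      simp only [pushedEdge, cpEdge, Prod.mk_add_mk, Prod.mk.injEq, ne_eq] at this ⊢
      clear * - m1 m2 m3 n1 n2 n3 this
      grind
    have := hi (h.trans h2.symm)
    rw [← hj]
    congr 1
    linear_combination -this
  have hm1 : f (i - 1) = (1, 2) := by
    have hne : f (i - 1) ≠ (2, 1) := by
      intro h
      have := hi (h.trans h3.symm)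
      exact h4 (by linear_combination -this)
    have := he' (i - 1) i (by ring)
    rw [h0] at this
    generalize f (i - 1) = x at *
    obtain ⟨a, b⟩ := x
    simp only [pushedEdge, cpEdge, Prod.mk_add_mk, Prod.mk.injEq, ne_eq] at this hne ⊢
    clear * - m1 m2 m3 n1 n2 n3 this hne
    grind
  have hm2 : f (i - 2) = (0, 2) := by
    have := he' (i - 2) (i - 1) (by ring)
    rw [hm1] at this
    generalize f (i - 2) = x at *
    obtain ⟨a, b⟩ := x
    simp only [pushedEdge, cpEdge, Prod.mk_add_mk, Prod.mk.injEq, ne_eq] at this ⊢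
    clear * - m1 m2 m3 n1 n2 n3 this
    grind
  have hm3 : f (i - 3) = (0, 1) := by
    obtain ⟨j, hj⟩ := sur (0, 1)
    have := he' j (j + 1) rfl
    have h : f (j + 1) = (0, 2) := by
      rw [hj] at this
      generalize f (j + 1) = x at *
      obtain ⟨a, b⟩ := x
      simp only [pushedEdge, cpEdge, Prod.mk_add_mk, Prod.mk.injEq, ne_eq] at this ⊢
      clear * - m1 m2 m3 n1 n2 n3 this
      grind
    have := hi (h.trans hm2.symm)
    rw [← hj]
    congr 1
    linear_combination -this
  have hm4 : f (i - 4) = (0, 0) := by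
    obtain ⟨j, hj⟩ := sur (0, 0)
    have := he' j (j + 1) rfl
    have hne : f (j + 1) ≠ (1, 0) := by
      intro h
      have := hi (h.trans h1.symm)
      have h' : j = i := by linear_combination this
      rw [h', h0] at hj
      simp only [Prod.mk.injEq] at hj
      exact m1 hj.1
    have h : f (j + 1) = (0, 1) := by
      rw [hj] at this
      generalize f (j + 1) = x at *
      obtain ⟨a, b⟩ := x
      simp only [pushedEdge, cpEdge, Prod.mk_add_mk, Prod.mk.injEq, ne_eq] at this hne ⊢
      clear * - m1 m2 m3 n1 n2 n3 this hne
      grind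
    have := hi (h.trans hm3.symm)
    rw [← hj]
    congr 1
    linear_combination -this
  have ginj : ∀ k l : ℕ, k < M + 5 → l < M + 5 → f (i + 1 + k) = f (i + 1 + l) → k = l := by
    intro k l hk hl h
    have := add_left_cancel (hi h)
    rw [ZMod.natCast_eq_natCast_iff', Nat.mod_eq_of_lt hk, Nat.mod_eq_of_lt hl] at this
    exact this
  have gsur : ∀ x, ∃ k : ℕ, k < M + 5 ∧ f (i + 1 + k) = x := by
    intro x
    obtain ⟨j, rfl⟩ := sur x
    refine ⟨ZMod.val (j - i - 1), ZMod.val_lt _, ?_⟩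
    rw [ZMod.natCast_zmod_val]
    congr 1
    ring
  have g0 : f (i + 1 + (M : ℕ)) = (0, 0) := by rw [← hm4, h5]; congr 1; ring
  have g1 : f (i + 1 + (M + 1 : ℕ)) = (0, 1) := by rw [← hm3]; push_cast; rw [h5]; congr 1; ring
  have g2 : f (i + 1 + (M + 2 : ℕ)) = (0, 2) := by rw [← hm2]; push_cast; rw [h5]; congr 1; ring
  have g3 : f (i + 1 + (M + 3 : ℕ)) = (1, 2) := by rw [← hm1]; push_cast; rw [h5]; congr 1; ring
  have g4 : f (i + 1 + (M + 4 : ℕ)) = (1, 1) := by rw [← h0]; push_cast; rw [h5]; congr 1; ring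
  have key : ∀ k : ℕ, k < M + 5 → (f (i + 1 + k) + (0, -1) ∉ R22 m n ↔ k < M + 1) := by
    intro k hk
    constructor
    · intro h
      by_contra hc
      apply h
      have : k = M + 1 ∨ k = M + 2 ∨ k = M + 3 ∨ k = M + 4 := by omega
      rcases this with rfl | rfl | rfl | rfl
      · rw [g1]; simp [R22]
      · rw [g2]; simp [R22]; right; ring
      · rw [g3]; simp [R22]; right; ring
      · rw [g4]; simp [R22]
    · intro hk' h
      have : f (i + 1 + k) = (0, 1) ∨ f (i + 1 + k) = (0, 2) ∨ f (i + 1 + k) = (1, 2) ∨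
          f (i + 1 + k) = (1, 1) := by
        generalize f (i + 1 + k) = x at *
        obtain ⟨a, b⟩ := x
        simp only [R22, Set.mem_ofPred_eq, Prod.mk_add_mk, Prod.mk.injEq] at h ⊢
        clear * - m1 m2 m3 n1 n2 n3 h
        grind
      rcases this with h | h | h | h
      · have := ginj _ _ hk (by omega) (h.trans g1.symm); omega
      · have := ginj _ _ hk (by omega) (h.trans g2.symm); omega
      · have := ginj _ _ hk (by omega) (h.trans g3.symm); omega
      · have := ginj _ _ hk (by omega) (h.trans g4.symm); omega
  have key0 := (key 0 (by omega)).2 (by omega)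
  have keyM := (key M (by omega)).2 (by omega)
  refine hamOn_of_seq _ _ M (fun k => f (i + 1 + k) + (0, -1)) ?_ ?_ ?_ ?_
  · intro k l hk hl h
    exact ginj k l (by omega) (by omega) (add_right_cancel h)
  · intro x
    constructor
    · intro hx
      obtain ⟨k, hk, hk'⟩ := gsur (x + (0, 1))
      have hxx : f (i + 1 + k) + (0, -1) = x := by
        rw [hk']; ext <;> simp
      exact ⟨k, (key k hk).1 (by rw [hxx]; exact hx), hxx⟩
    · rintro ⟨k, hk, rfl⟩
      exact (key k (by omega)).2 hk
  · intro k hk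
    refine ⟨?_, (key k (by omega)).2 (by omega), (key (k + 1) (by omega)).2 (by omega)⟩
    have e := he' (i + 1 + k) (i + 1 + (k + 1 : ℕ)) (by push_cast; ring)
    have n1 : f (i + 1 + k) ≠ (1, 1) := fun h => by
      have := ginj _ _ (by omega) (by omega) (h.trans g4.symm); omega
    have n2 : f (i + 1 + (k + 1 : ℕ)) ≠ (1, 1) := fun h => by
      have := ginj _ _ (by omega) (by omega) (h.trans g4.symm); omega
    simp only [pushedEdge, n1, n2, or_self, and_false, or_false, ne_eq, not_false_eq_true,
      and_true] at e
    rcases e with e | e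
    · left; simp only [e]; abel
    · right; simp only [e]; abel
  · refine ⟨?_, keyM, key0⟩
    left
    simp only [g0, Nat.cast_zero, add_zero, h1]
    simp

set_option maxHeartbeats 1000000 in
theorem backward (m n M : ℕ) (hm : 3 ≤ m) (hn : 3 ≤ n)
    (h : HamOn (fun u v => cpEdge m n u v ∧ u ∉ R22 m n ∧ v ∉ R22 m n)
        (R22 m n)ᶜ (M + 1)) : HamOn (pushedEdge m n (1, 1)) Set.univ (M + 5) := by
  obtain ⟨m2, m1, m3⟩ := two_ne m hm
  obtain ⟨n2, n1, n3⟩ := two_ne n hn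
  obtain ⟨f, hi, hr, he⟩ := h
  have sur : ∀ x, x ∉ R22 m n → ∃ j, f j = x := fun x hx => by
    have : x ∈ Set.range f := by rw [hr]; exact hx
    exact this
  have hnot : ∀ j, f j ∉ R22 m n := fun j => (he j).2.1
  obtain ⟨i, h0⟩ := sur (0, -1) (by
    simp only [R22, Set.mem_ofPred_eq]
    rintro ⟨-, h | h⟩
    · exact n1 (by linear_combination -h)
    · exact n2 (by linear_combination -h))
  have h1 : f (i + 1) = (1, -1) := by
    have e := (he i).1
    have e' := hnot (i + 1)
    rw [h0] at e
    generalize f (i + 1) = x at *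
    obtain ⟨a, b⟩ := x
    simp only [R22, Set.mem_ofPred_eq, cpEdge, Prod.mk_add_mk, Prod.mk.injEq] at e e' ⊢
    clear * - m1 m2 m3 n1 n2 n3 e e'
    grind
  have hM : (M : ZMod (M + 1)) = -1 := by
    have := ZMod.natCast_self (M + 1)
    push_cast at this
    linear_combination this
  have ginj : ∀ k l : ℕ, k < M + 1 → l < M + 1 → f (i + 1 + k) = f (i + 1 + l) → k = l := by
    intro k l hk hl h
    have := add_left_cancel (hi h)
    rw [ZMod.natCast_eq_natCast_iff', Nat.mod_eq_of_lt hk, Nat.mod_eq_of_lt hl] at this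
    exact this
  have gsur : ∀ x, x ∉ R22 m n → ∃ k : ℕ, k < M + 1 ∧ f (i + 1 + k) = x := by
    intro x hx
    obtain ⟨j, rfl⟩ := sur x hx
    refine ⟨ZMod.val (j - i - 1), ZMod.val_lt _, ?_⟩
    rw [ZMod.natCast_zmod_val]
    congr 1
    ring
  have fM : f (i + 1 + (M : ℕ)) = (0, -1) := by rw [← h0, hM]; congr 1; ring
  let g : ℕ → ZMod m × ZMod n := fun k =>
    if k < M + 1 then f (i + 1 + k) + (0, 1) else
    if k = M + 1 then (0, 1) else if k = M + 2 then (0, 2) else if k = M + 3 then (1, 2) else (1, 1)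
  have gl : ∀ k, k < M + 1 → g k = f (i + 1 + k) + (0, 1) := fun k hk => if_pos hk
  have g1 : g (M + 1) = (0, 1) := by simp [g]
  have g2 : g (M + 2) = (0, 2) := by simp [g]
  have g3 : g (M + 3) = (1, 2) := by simp [g]
  have g4 : g (M + 4) = (1, 1) := by simp [g]
  clear_value g
  have gM : g M = (0, 0) := by rw [gl M (by omega), fM]; simp
  have g0 : g 0 = (1, 0) := by rw [gl 0 (by omega)]; simp [h1]
  have gne : ∀ k, k < M + 1 → g k ≠ (0, 1) ∧ g k ≠ (0, 2) ∧ g k ≠ (1, 2) ∧ g k ≠ (1, 1) := by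
    intro k hk
    rw [gl k hk]
    have := hnot (i + 1 + k)
    generalize f (i + 1 + k) = x at *
    obtain ⟨a, b⟩ := x
    simp only [R22, Set.mem_ofPred_eq, Prod.mk_add_mk, Prod.mk.injEq, ne_eq] at this ⊢
    clear * - m1 m2 m3 n1 n2 n3 this
    grind
  have cases5 : ∀ k, k < M + 5 → k < M + 1 ∨ k = M + 1 ∨ k = M + 2 ∨ k = M + 3 ∨ k = M + 4 := by
    intro k hk; omega
  refine hamOn_of_seq _ _ (M + 4) g ?_ ?_ ?_ ?_
  · intro k l hk hl h
    rcases cases5 k hk with hk | hk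
    · rcases cases5 l hl with hl | hl
      · rw [gl k hk, gl l hl] at h
        exact ginj k l hk hl (add_right_cancel h)
      · exfalso
        have := gne k hk
        rcases hl with rfl | rfl | rfl | rfl
        · exact this.1 (h.trans g1)
        · exact this.2.1 (h.trans g2)
        · exact this.2.2.1 (h.trans g3)
        · exact this.2.2.2 (h.trans g4)
    · rcases cases5 l hl with hl | hl
      · exfalso
        have := gne l hl
        rcases hk with rfl | rfl | rfl | rfl
        · exact this.1 (h.symm.trans g1)
        · exact this.2.1 (h.symm.trans g2)
        · exact this.2.2.1 (h.symm.trans g3)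
        · exact this.2.2.2 (h.symm.trans g4)
      · rcases hk with rfl | rfl | rfl | rfl <;> rcases hl with rfl | rfl | rfl | rfl <;>
          first | rfl | (exfalso; simp only [g1, g2, g3, g4, Prod.mk.injEq] at h; clear * - m1 m2 m3 n1 n2 n3 h; grind)
  · intro x
    refine ⟨fun _ => ?_, fun _ => trivial⟩
    by_cases hx : x + (0, -1) ∈ R22 m n
    · have : x = (0, 1) ∨ x = (0, 2) ∨ x = (1, 2) ∨ x = (1, 1) := by
        obtain ⟨a, b⟩ := x
        simp only [R22, Set.mem_ofPred_eq, Prod.mk_add_mk, Prod.mk.injEq] at hx ⊢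
        clear * - m1 m2 m3 n1 n2 n3 hx
        grind
      rcases this with rfl | rfl | rfl | rfl
      · exact ⟨_, by omega, g1⟩
      · exact ⟨_, by omega, g2⟩
      · exact ⟨_, by omega, g3⟩
      · exact ⟨_, by omega, g4⟩
    · obtain ⟨k, hk, hk'⟩ := gsur _ hx
      refine ⟨k, by omega, ?_⟩
      rw [gl k hk, hk']
      ext <;> simp
  · intro k hk
    have : k < M ∨ k = M ∨ k = M + 1 ∨ k = M + 2 ∨ k = M + 3 := by omega
    rcases this with hk | rfl | rfl | rfl | rfl
    · left
      refine ⟨?_, (gne k (by omega)).2.2.2, (gne (k + 1) (by omega)).2.2.2⟩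
      rw [gl k (by omega), gl (k + 1) (by omega)]
      have e := (he (i + 1 + k)).1
      have e' : i + 1 + (k : ZMod (M + 1)) + 1 = i + 1 + (k + 1 : ℕ) := by push_cast; ring
      rw [e'] at e
      rcases e with e | e
      · left; rw [e]; abel
      · right; rw [e]
    · rw [gM, g1]
      simp only [pushedEdge, cpEdge, Prod.mk_add_mk, Prod.mk.injEq, ne_eq]
      clear * - m1 m2 m3 n1 n2 n3
      grind
    · rw [g1, g2]
      simp only [pushedEdge, cpEdge, Prod.mk_add_mk, Prod.mk.injEq, ne_eq]
      clear * - m1 m2 m3 n1 n2 n3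
      grind
    · rw [g2, g3]
      simp only [pushedEdge, cpEdge, Prod.mk_add_mk, Prod.mk.injEq, ne_eq]
      clear * - m1 m2 m3 n1 n2 n3
      grind
    · rw [g3, g4]
      simp only [pushedEdge, cpEdge, Prod.mk_add_mk, Prod.mk.injEq, ne_eq]
      clear * - m1 m2 m3 n1 n2 n3
      grind
  · rw [g4, g0]
    simp only [pushedEdge, cpEdge, Prod.mk_add_mk, Prod.mk.injEq, ne_eq]
    clear * - m1 m2 m3 n1 n2 n3
    grind

theorem cpEdge_swap (m n : ℕ) (u v : ZMod m × ZMod n) (h : cpEdge m n u v) :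
    cpEdge n m u.swap v.swap := by
  rcases h with rfl | rfl
  · right; ext <;> simp
  · left; ext <;> simp

theorem R22_swap (m n : ℕ) (u : ZMod m × ZMod n) : u.swap ∈ R22 n m ↔ u ∈ R22 m n := by
  simp only [R22, Set.mem_ofPred_eq, Prod.fst_swap, Prod.snd_swap]
  exact and_comm

theorem forward (m n M : ℕ) (hm : 3 ≤ m) (hn : 3 ≤ n)
    (h : HamOn (pushedEdge m n (1, 1)) Set.univ (M + 5)) :
    HamOn (fun u v => cpEdge m n u v ∧ u ∉ R22 m n ∧ v ∉ R22 m n)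
        (R22 m n)ᶜ (M + 1) := by
  obtain ⟨m2, m1, m3⟩ := two_ne m hm
  obtain ⟨n2, n1, n3⟩ := two_ne n hn
  obtain ⟨f, hi, hr, he⟩ := h
  obtain ⟨i, h0⟩ : ∃ i, f i = (1, 1) := by
    have : ((1, 1) : ZMod m × ZMod n) ∈ Set.range f := by rw [hr]; trivial
    exact this
  have h1 : f (i + 1) = (1, 0) ∨ f (i + 1) = (0, 1) := by
    have e := he i
    rw [h0] at e
    generalize f (i + 1) = x at *
    obtain ⟨a, b⟩ := x
    simp only [pushedEdge, cpEdge, Prod.mk_add_mk, Prod.mk.injEq, ne_eq] at e ⊢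
    clear * - m1 m2 m3 n1 n2 n3 e
    grind
  rcases h1 with h1 | h1
  · exact caseA m n M hm hn f hi hr he i h0 h1
  · have := caseA n m M hn hm (fun j => (f j).swap) (Prod.swap_injective.comp hi) ?_ ?_ i
      (by simp [h0]) (by simp [h1])
    · refine hamOn_map _ _ _ _ _ (Equiv.prodComm _ _) ?_ ?_ this
      · rintro u v ⟨e, hu, hv⟩
        exact ⟨cpEdge_swap _ _ _ _ e, (R22_swap n m u).not.2 hu, (R22_swap n m v).not.2 hv⟩
      · intro x
        exact (R22_swap n m x).not
    · exact Set.range_eq_univ.2 (Prod.swap_surjective.comp (Set.range_eq_univ.1 hr))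
    · intro j
      have sw : ∀ u : ZMod m × ZMod n, u.swap = (1, 1) ↔ u = (1, 1) := by
        rintro ⟨a, b⟩
        simp only [Prod.swap_prod_mk, Prod.mk.injEq]
        exact and_comm
      rcases he j with ⟨e, hu, hv⟩ | ⟨e, hu⟩
      · exact Or.inl ⟨cpEdge_swap _ _ _ _ e, (sw _).not.2 hu, (sw _).not.2 hv⟩
      · exact Or.inr ⟨cpEdge_swap _ _ _ _ e, hu.imp (sw _).2 (sw _).2⟩

/-- For `m, n ≥ 3`, the pushed digraph `P(C⃗_m □ C⃗_n)` (pushing at `(1,1)`) is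
hamiltonian iff `(C⃗_m □ C⃗_n) ∖ R_{2,2}` is hamiltonian. -/
theorem stmt_17 (m n : ℕ) (hm : 3 ≤ m) (hn : 3 ≤ n) :
    HamOn (pushedEdge m n (1, 1)) Set.univ (m * n) ↔
      HamOn (fun u v => cpEdge m n u v ∧ u ∉ R22 m n ∧ v ∉ R22 m n)
        (R22 m n)ᶜ (m * n - 4) := by
  obtain ⟨M, hM⟩ : ∃ M, m * n = M + 5 := ⟨m * n - 5, by nlinarith [Nat.sub_add_cancel (show 5 ≤ m * n by nlinarith)]⟩
  have h' : m * n - 4 = M + 1 := by omega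
  rw [h', hM]
  exact ⟨forward m n M hm hn, backward m n M hm hn⟩
end

section
/- If m, n ≥ 3 and gcd(m, n) ≠ 1, then the digraph P(C⃗_m □ C⃗_n), obtained from the Cartesian product of directed cycles C⃗_m and C⃗_n by reversing all four directed edges incident to one vertex, is not hamiltonian. In particular, if C⃗_m □ C⃗_n is hamiltonian then P(C⃗_m □ C⃗_n) is not. -/
open Equiv

theorem sign_of_step (l : ℕ) (ψ : Perm (Fin (l + 1)))
    (h : ∀ k, k ≠ 0 → ψ k = k ∨ ψ k = k - 1) :
    Perm.sign ψ = (-1) ^ (ψ 0).val := by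
  obtain ⟨j, hj⟩ : ∃ j, ψ 0 = j := ⟨_, rfl⟩
  have hup : ∀ t : ℕ, ∀ k : Fin (l + 1), k.val = j.val + 1 + t → ψ k = k := by
    intro t
    induction t with
    | zero =>
      intro k hk
      have hk0 : k ≠ 0 := by rintro rfl; simp at hk
      rcases h k hk0 with h1 | h1
      · exact h1
      · exfalso
        have : k - 1 = j := by
          apply Fin.ext; rw [Fin.val_sub_one_of_ne_zero hk0]; omega
        rw [this, ← hj] at h1
        exact hk0 (ψ.injective h1)
    | succ t ih =>
      intro k hk
      have hk0 : k ≠ 0 := by rintro rfl; simp at hk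
      rcases h k hk0 with h1 | h1
      · exact h1
      · exfalso
        have h2 := ih (k - 1) (by rw [Fin.val_sub_one_of_ne_zero hk0]; omega)
        have h3 := ψ.injective (h1.trans h2.symm)
        have := congrArg Fin.val h3
        rw [Fin.val_sub_one_of_ne_zero hk0] at this
        omega
  have hdown : ∀ t : ℕ, ∀ k : Fin (l + 1), k ≠ 0 → k.val + t = j.val → ψ k = k - 1 := by
    intro t
    induction t with
    | zero =>
      intro k hk0 hk
      rcases h k hk0 with h1 | h1
      · exfalso
        have : k = j := Fin.ext (by omega)
        rw [this, ← hj] at h1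
        have := ψ.injective h1
        apply hk0
        rw [‹k = j›, ← hj, this]
      · exact h1
    | succ t ih =>
      intro k hk0 hk
      rcases h k hk0 with h1 | h1
      · exfalso
        have hlt : k.val + 1 < l + 1 := by have := j.isLt; omega
        have h2 := ih ⟨k.val + 1, hlt⟩ (by intro h; simpa using congrArg Fin.val h)
          (by simp; omega)
        have h3 : (⟨k.val + 1, hlt⟩ : Fin (l + 1)) - 1 = k := by
          apply Fin.ext
          rw [Fin.val_sub_one_of_ne_zero (by intro h; simpa using congrArg Fin.val h)]
          simp
        rw [h3] at h2
        have := congrArg Fin.val (ψ.injective (h2.trans h1.symm))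
        simp at this
      · exact h1
  have key : ψ * Fin.cycleRange j = 1 := by
    ext1 k
    simp only [Perm.mul_apply, Perm.one_apply]
    rcases lt_trichotomy k j with hk | hk | hk
    · rw [Fin.cycleRange_of_lt hk]
      have hkv : (k + 1).val = k.val + 1 := by
        apply Fin.val_add_one_of_lt
        exact lt_of_lt_of_le hk (Fin.le_last j)
      rw [hdown (j.val - (k.val + 1)) (k + 1)
        (by intro h; rw [h] at hkv; simp at hkv) (by rw [hkv]; have : k.val < j.val := hk; omega)]
      simp
    · rw [Fin.cycleRange_of_eq hk, hj, hk]
    · rw [Fin.cycleRange_of_gt hk]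
      exact hup (k.val - (j.val + 1)) k (by have : j.val < k.val := hk; omega)
  have h1 := congrArg Perm.sign key
  rw [Perm.sign_mul, Fin.sign_cycleRange, Perm.sign_one] at h1
  rw [hj]
  calc Perm.sign ψ = Perm.sign ψ * ((-1) ^ j.val * (-1) ^ j.val) := by
        rw [← pow_add, Even.neg_one_pow ⟨_, rfl⟩, mul_one]
    _ = _ := by rw [← mul_assoc, h1, one_mul]

theorem sign_of_step' (L : ℕ) [NeZero L] (ψ : Perm (ZMod L))
    (h : ∀ k, k ≠ 0 → ψ k = k ∨ ψ k = k - 1) :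
    Perm.sign ψ = (-1) ^ (ψ 0).val := by
  obtain ⟨l, rfl⟩ : ∃ l, L = l + 1 := ⟨L - 1, by have := NeZero.pos L; omega⟩
  exact sign_of_step l ψ h

theorem sign_of_trans (L : ℕ) (hL : 2 ≤ L) [NeZero L] (τ : Perm (ZMod L))
    (h : ∀ i : ℕ, (τ ^ i) 0 = 0 → L ∣ i) :
    Perm.sign τ = -(-1) ^ L := by
  have hinj : Function.Injective (fun i : Fin L => (τ ^ i.val) 0) := by
    have aux : ∀ a b : Fin L, a ≤ b → (τ ^ a.val) 0 = (τ ^ b.val) 0 → a = b := by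
      intro a b hab he
      have hab' : a.val ≤ b.val := hab
      have : (τ ^ (b.val - a.val)) 0 = 0 := by
        apply (τ ^ a.val).injective
        rw [← Perm.mul_apply, ← pow_add, he]
        congr 2; omega
      have := Nat.eq_zero_of_dvd_of_lt (h _ this) (by omega)
      exact Fin.ext (by omega)
    intro a b he
    rcases le_total a b with hab | hab
    · exact aux a b hab he
    · exact (aux b a hab he.symm).symm
  have hsurj : Function.Surjective (fun i : Fin L => (τ ^ i.val) 0) :=
    ((Fintype.bijective_iff_injective_and_card _).2 ⟨hinj, by simp [ZMod.card]⟩).2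
  have h01 : (τ : ZMod L → ZMod L) 0 ≠ 0 := by
    intro h0
    have := h 1 (by simpa using h0)
    have := Nat.le_of_dvd one_pos this
    omega
  have hc : τ.IsCycle := by
    refine ⟨0, h01, fun y _ => ?_⟩
    obtain ⟨i, hi⟩ := hsurj y
    exact ⟨i.val, by simpa using hi⟩
  have hsup : τ.support = Finset.univ := by
    ext y
    simp only [Perm.mem_support, Finset.mem_univ, iff_true]
    obtain ⟨i, rfl⟩ := hsurj y
    intro he
    apply h01
    apply (τ ^ i.val).injective
    simp only at he
    rw [← Perm.mul_apply, ← pow_succ, pow_succ', Perm.mul_apply, he]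
  rw [hc.sign, hsup, Finset.card_univ, ZMod.card]

theorem ham_perm {V : Type} (E : V → V → Prop) (N : ℕ) (h : HamOn E Set.univ N) :
    ∃ σ : Perm V, (∀ u, E u (σ u)) ∧ ∀ u, ∀ i : ℕ, (σ ^ i) u = u → N ∣ i := by
  obtain ⟨f, hi, hr, hE⟩ := h
  let F : ZMod N ≃ V := Equiv.ofBijective f ⟨hi, Set.range_eq_univ.1 hr⟩
  have hF : ∀ a, F a = f a := fun a => rfl
  let σ : Perm V := F.symm.trans ((Equiv.addRight 1).trans F)
  have hσ : ∀ a, σ (F a) = F (a + 1) := fun a => by simp [σ]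
  have hσi : ∀ i : ℕ, ∀ a, (σ ^ i) (F a) = F (a + i) := by
    intro i
    induction i with
    | zero => simp
    | succ i ih =>
      intro a
      rw [pow_succ', Perm.mul_apply, ih, hσ]
      push_cast; rw [add_assoc]
  refine ⟨σ, fun u => ?_, fun u i hu => ?_⟩
  · obtain ⟨a, rfl⟩ := F.surjective u
    rw [hσ]; exact hE a
  · obtain ⟨a, rfl⟩ := F.surjective u
    rw [hσi] at hu
    have := F.injective hu
    rw [add_eq_left] at this
    exact (ZMod.natCast_eq_zero_iff i N).1 this

/-- The diagonal homomorphism. -/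
def dg (m n L : ℕ) (hm : m ∣ L) (hn : n ∣ L) : ZMod L →+ ZMod m × ZMod n :=
  ((ZMod.castHom hm (ZMod m)).toAddMonoidHom).prod (-(ZMod.castHom hn (ZMod n)).toAddMonoidHom)

theorem dg_one (m n L : ℕ) (hm : m ∣ L) (hn : n ∣ L) : dg m n L hm hn 1 = (1, -1) := by
  show (ZMod.castHom hm (ZMod m) 1, -(ZMod.castHom hn (ZMod n) 1)) = _
  rw [map_one, map_one]

theorem dg_nat (m n L : ℕ) (hm : m ∣ L) (hn : n ∣ L) (k : ℕ) :
    dg m n L hm hn k = ((k : ZMod m), -(k : ZMod n)) := by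
  show (ZMod.castHom hm (ZMod m) k, -(ZMod.castHom hn (ZMod n) k)) = _
  rw [map_natCast, map_natCast]

theorem dg_inj (m n : ℕ) (hm : 3 ≤ m) (hn : 3 ≤ n) :
    Function.Injective (dg m n (Nat.lcm m n) (Nat.dvd_lcm_left m n) (Nat.dvd_lcm_right m n)) := by
  have : NeZero (Nat.lcm m n) := ⟨(Nat.lcm_pos (by omega) (by omega)).ne'⟩
  rw [injective_iff_map_eq_zero]
  intro a ha
  rw [← ZMod.natCast_zmod_val a, dg_nat] at ha
  have h1 := congrArg Prod.fst ha
  have h2 := congrArg Prod.snd ha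
  simp only [Prod.fst_zero, Prod.snd_zero, neg_eq_zero, ZMod.natCast_eq_zero_iff] at h1 h2
  rw [← ZMod.natCast_zmod_val a, ZMod.natCast_eq_zero_iff]
  exact Nat.lcm_dvd h1 h2

/-- The sum homomorphism mod the gcd. -/
def sm (m n : ℕ) : ZMod m × ZMod n →+ ZMod (Nat.gcd m n) :=
  (ZMod.castHom (Nat.gcd_dvd_left m n) (ZMod (Nat.gcd m n))).toAddMonoidHom.coprod
    (ZMod.castHom (Nat.gcd_dvd_right m n) (ZMod (Nat.gcd m n))).toAddMonoidHom

theorem sm_nat (m n a b : ℕ) : sm m n ((a : ZMod m), (b : ZMod n)) = a + b := by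
  show ZMod.castHom (Nat.gcd_dvd_left m n) (ZMod (Nat.gcd m n)) a +
    ZMod.castHom (Nat.gcd_dvd_right m n) (ZMod (Nat.gcd m n)) b = _
  rw [map_natCast, map_natCast]

theorem sm_e1 (m n : ℕ) : sm m n (1, 0) = 1 := by simpa using sm_nat m n 1 0
theorem sm_e2 (m n : ℕ) : sm m n (0, 1) = 1 := by simpa using sm_nat m n 0 1

theorem sm_dg (m n L : ℕ) [NeZero L] (hm : m ∣ L) (hn : n ∣ L) (k : ZMod L) :
    sm m n (dg m n L hm hn k) = 0 := by
  rw [← ZMod.natCast_zmod_val k, dg_nat]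
  have : (((k.val : ZMod m), -(k.val : ZMod n)) : ZMod m × ZMod n)
      = ((k.val : ZMod m), ((0 : ℕ) : ZMod n)) - (((0 : ℕ) : ZMod m), (k.val : ZMod n)) := by
    ext <;> simp
  rw [this, map_sub, sm_nat, sm_nat]; simp

theorem edge_cases {m n : ℕ} {u v : ZMod m × ZMod n} (h : pushedEdge m n 0 u v) :
    (u ≠ 0 → v ≠ 0 → v = u + (1, 0) ∨ v = u + (0, 1)) ∧
    (u = 0 → v = -(1, 0) ∨ v = -(0, 1)) ∧ (v = 0 → u = (1, 0) ∨ u = (0, 1)) := by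
  unfold pushedEdge cpEdge at h
  refine ⟨fun hu hv => ?_, fun hu => ?_, fun hv => ?_⟩
  · tauto
  · subst hu
    have h' : (0 : ZMod m × ZMod n) = v + (1, 0) ∨ (0 : ZMod m × ZMod n) = v + (0, 1) := by tauto
    rcases h' with h | h
    · left; exact eq_neg_of_add_eq_zero_left h.symm
    · right; exact eq_neg_of_add_eq_zero_left h.symm
  · subst hv
    simpa using (show u = 0 + (1, 0) ∨ u = 0 + (0, 1) by tauto)

theorem main_aux (m n : ℕ) (hm : 3 ≤ m) (hn : 3 ≤ n) (hg : Nat.gcd m n ≠ 1)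
    (σ : Perm (ZMod m × ZMod n)) (hσ : ∀ u, pushedEdge m n 0 u (σ u))
    (hc : ∀ u, ∀ i : ℕ, (σ ^ i) u = u → m * n ∣ i) (h10 : σ (1, 0) = 0) : False := by
  have hLpos : 0 < Nat.lcm m n := Nat.lcm_pos (by omega) (by omega)
  have : NeZero (Nat.lcm m n) := ⟨hLpos.ne'⟩
  have hLm : m ≤ Nat.lcm m n := Nat.le_of_dvd hLpos (Nat.dvd_lcm_left m n)
  have hLmul : Nat.gcd m n * Nat.lcm m n = m * n := Nat.gcd_mul_lcm m n
  have hinj := dg_inj m n hm hn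
  have hone := dg_one m n _ (Nat.dvd_lcm_left m n) (Nat.dvd_lcm_right m n)
  have hnat := dg_nat m n _ (Nat.dvd_lcm_left m n) (Nat.dvd_lcm_right m n)
  have hsm := sm_dg m n _ (Nat.dvd_lcm_left m n) (Nat.dvd_lcm_right m n)
  generalize dg m n _ (Nat.dvd_lcm_left m n) (Nat.dvd_lcm_right m n) = φ at *
  generalize hL : Nat.lcm m n = L at *
  have h1ne : (1 : ZMod (Nat.gcd m n)) ≠ 0 := by
    intro h
    have : ((1 : ℕ) : ZMod (Nat.gcd m n)) = 0 := by simpa using h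
    rw [ZMod.natCast_eq_zero_iff] at this
    exact hg (Nat.dvd_one.1 this)
  obtain ⟨e1, he1⟩ : ∃ e : ZMod m × ZMod n, e = (1, 0) := ⟨_, rfl⟩
  obtain ⟨e2, he2⟩ : ∃ e : ZMod m × ZMod n, e = (0, 1) := ⟨_, rfl⟩
  have hone' : φ 1 = e1 - e2 := by rw [hone, he1, he2]; ext <;> simp
  have hs1 : sm m n e1 = 1 := by rw [he1, sm_e1]
  have hs2 : sm m n e2 = 1 := by rw [he2, sm_e2]
  have hE := fun u => edge_cases (hσ u)
  rw [← he1] at h10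
  simp only [← he1, ← he2] at hE
  have hne : ∀ k k', e1 + φ k ≠ φ k' := by
    intro k k' h
    have := congrArg (sm m n) h
    rw [map_add, hs1, hsm, hsm, add_zero] at this
    exact h1ne this
  have hne0 : ∀ k, e1 + φ k ≠ 0 := fun k => by simpa using hne k 0
  -- gcd = 2
  have hg2 : Nat.gcd m n = 2 := by
    have hp : ∀ k, ∃ k', σ.symm (e1 + φ k) = φ k' := by
      intro k
      have := hE (σ.symm (e1 + φ k))
      rw [Equiv.apply_symm_apply] at this
      by_cases h0 : σ.symm (e1 + φ k) = 0
      · exact ⟨0, by rw [h0, map_zero]⟩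
      · rcases this.1 h0 (hne0 k) with h | h
        · refine ⟨k, ?_⟩
          exact (add_right_cancel ((add_comm _ _).trans h)).symm
        · refine ⟨k + 1, ?_⟩
          rw [map_add φ, hone', eq_sub_of_add_eq h.symm]; abel
    choose p hp using hp
    have hpi : Function.Injective p := by
      intro a b hab
      have := (hp a).trans ((congrArg φ hab).trans (hp b).symm)
      exact hinj (add_left_cancel (σ.symm.injective this))
    obtain ⟨k, hk⟩ := (Finite.injective_iff_surjective.1 hpi) 0
    have h := hp k
    rw [hk, map_zero, Equiv.symm_apply_eq] at h
    have h2 : (-1 : ZMod (Nat.gcd m n)) = 1 := by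
      rcases (hE 0).2.1 rfl with h' | h' <;>
      · rw [← h] at h'
        have := congrArg (sm m n) h'
        rw [map_add, hs1, hsm, map_neg, add_zero] at this
        first | rw [hs1] at this | rw [hs2] at this
        exact this.symm
    have h3 : ((2 : ℕ) : ZMod (Nat.gcd m n)) = 0 := by
      push_cast
      rw [← one_add_one_eq_two]; nth_rw 1 [← h2]; ring
    rw [ZMod.natCast_eq_zero_iff] at h3
    exact ((Nat.dvd_prime Nat.prime_two).1 h3).resolve_left hg
  have hm2 : 2 ∣ m := hg2 ▸ Nat.gcd_dvd_left m n
  have hn2 : 2 ∣ n := hg2 ▸ Nat.gcd_dvd_right m n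
  obtain ⟨s, hs⟩ : ∃ s : ZMod L, φ s = e1 + e2 := by
    have hcr : 1 ≡ n - 1 [MOD Nat.gcd m n] := by
      rw [hg2]; unfold Nat.ModEq; omega
    obtain ⟨c, hc1, hc2⟩ := Nat.chineseRemainder' hcr
    refine ⟨(c : ZMod L), ?_⟩
    rw [hnat, he1, he2, (ZMod.natCast_eq_natCast_iff _ _ _).2 hc1,
      (ZMod.natCast_eq_natCast_iff _ _ _).2 hc2]
    rw [Nat.cast_sub (by omega)]
    ext <;> simp
  -- parity of elements
  have h2e1 : φ (s + 1) = e1 + e1 := by rw [map_add, hs, hone']; abel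
  have hsodd : Odd s.val := by
    have h := hs
    rw [← ZMod.natCast_zmod_val s, hnat, he1, he2] at h
    have h := congrArg Prod.fst h
    have h : ((s.val : ℕ) : ZMod m) = ((1 : ℕ) : ZMod m) := by simpa using h
    rw [ZMod.natCast_eq_natCast_iff] at h
    have := h.of_dvd hm2
    unfold Nat.ModEq at this
    rw [Nat.odd_iff]; omega
  have hjeven : Even (-s - 1 : ZMod L).val := by
    have h : φ (-s - 1) = -(e1 + e1) := by rw [← h2e1, ← map_neg]; congr 1; ring
    rw [← ZMod.natCast_zmod_val (-s - 1), hnat, he1] at h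
    have h := congrArg Prod.snd h
    have h : (((-s - 1 : ZMod L).val : ℕ) : ZMod n) = 0 := by simpa using h
    rw [ZMod.natCast_eq_zero_iff] at h
    exact even_iff_two_dvd.2 (hn2.trans h)
  have hsy10 : σ.symm 0 = e1 := by rw [Equiv.symm_apply_eq, h10]
  rcases (hE 0).2.1 rfl with hz | hz
  · -- main case
    have hp : ∀ k, ∃ k', σ (φ k) = e1 + φ k' ∧ (k = 0 → k' = -s - 1) ∧
        (k ≠ 0 → k' = k ∨ k' = k - 1) := by
      intro k
      by_cases hk : k = 0
      · refine ⟨-s - 1, ?_, fun _ => rfl, fun h => absurd hk h⟩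
        rw [hk, map_zero, hz, show (-s - 1 : ZMod L) = -(s + 1) by ring, map_neg, h2e1]; abel
      · have hk1 : φ k ≠ 0 := fun h => hk (hinj (by rw [h, map_zero]))
        have hk2 : σ (φ k) ≠ 0 := by
          intro h
          rw [← h10] at h
          exact hne 0 k (by rw [map_zero, add_zero]; exact (σ.injective h).symm)
        rcases (hE (φ k)).1 hk1 hk2 with h | h
        · exact ⟨k, by rw [h, add_comm], fun h => absurd h hk, fun _ => Or.inl rfl⟩
        · exact ⟨k - 1, by rw [h, map_sub, hone']; abel, fun h => absurd h hk,
            fun _ => Or.inr rfl⟩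
    choose p hp hp0 hp1 using hp
    have hq : ∀ k, ∃ k', σ.symm (φ k) = e1 + φ (k' - s) ∧ (k = 0 → k' = s) ∧
        (k ≠ 0 → k' = k ∨ k' = k - 1) := by
      intro k
      by_cases hk : k = 0
      · refine ⟨s, ?_, fun _ => rfl, fun h => absurd hk h⟩
        rw [hk, map_zero, hsy10]; simp
      · have hk1 : φ k ≠ 0 := fun h => hk (hinj (by rw [h, map_zero]))
        have hk2 : σ.symm (φ k) ≠ 0 := by
          intro h
          rw [Equiv.symm_apply_eq, hz] at h
          apply hne 0 (-k)
          rw [map_neg, h]; simp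
        have := (hE (σ.symm (φ k))).1 hk2
        rw [Equiv.apply_symm_apply] at this
        rcases this hk1 with h | h
        · refine ⟨k - 1, ?_, fun h => absurd h hk, fun _ => Or.inr rfl⟩
          rw [eq_sub_of_add_eq h.symm, map_sub, map_sub, hs, hone']; abel
        · refine ⟨k, ?_, fun h => absurd h hk, fun _ => Or.inl rfl⟩
          rw [eq_sub_of_add_eq h.symm, map_sub, hs]; abel
    choose q hq hq0 hq1 using hq
    have hpi : Function.Injective p := by
      intro a b hab
      have : σ (φ a) = σ (φ b) := by rw [hp, hp, hab]
      exact hinj (σ.injective this)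
    have hqi : Function.Injective q := by
      intro a b hab
      have : σ.symm (φ a) = σ.symm (φ b) := by rw [hq, hq, hab]
      exact hinj (σ.symm.injective this)
    let P : Perm (ZMod L) := Equiv.ofBijective p (Finite.injective_iff_bijective.1 hpi)
    let Q : Perm (ZMod L) := Equiv.ofBijective q (Finite.injective_iff_bijective.1 hqi)
    let A : Perm (ZMod L) := Equiv.addRight 1
    have hA : ∀ i : ℕ, ∀ x, (A ^ i) x = x + i := by
      intro i
      induction i with
      | zero => simp
      | succ i ih =>
        intro x
        rw [pow_succ', Perm.mul_apply, ih]
        simp [A, add_assoc]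
    have sP : Perm.sign P = 1 := by
      rw [sign_of_step' L P hp1]
      have : P 0 = -s - 1 := hp0 0 rfl
      rw [this]; exact hjeven.neg_one_pow
    have sQ : Perm.sign Q = -1 := by
      rw [sign_of_step' L Q hq1]
      have : Q 0 = s := hq0 0 rfl
      rw [this]; exact hsodd.neg_one_pow
    have sA : Perm.sign A = -(-1) ^ L := by
      apply sign_of_trans L (by omega)
      intro i hi
      rw [hA, zero_add, ZMod.natCast_eq_zero_iff] at hi
      exact hi
    let τ : Perm (ZMod L) := Q⁻¹ * (A ^ s.val * P)
    have hτ : ∀ k, σ (σ (φ k)) = φ (τ k) := by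
      intro k
      have hQ : q (τ k) = p k + s := by
        show Q (Q⁻¹ ((A ^ s.val) (P k))) = _
        rw [show ∀ x, Q (Q⁻¹ x) = x from fun x => Equiv.apply_symm_apply Q x, hA,
           ZMod.natCast_zmod_val]; rfl
      rw [hp, ← Equiv.eq_symm_apply, hq, hQ]; congr 2; ring
    have hτi : ∀ i : ℕ, ∀ k, (σ ^ (2 * i)) (φ k) = φ ((τ ^ i) k) := by
      intro i
      induction i with
      | zero => simp
      | succ i ih =>
        intro k
        rw [show 2 * (i + 1) = 1 + (1 + 2 * i) by ring, pow_add, pow_add, Perm.mul_apply,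
          Perm.mul_apply, ih, pow_one, hτ, pow_succ']
        rfl
    have sτ : Perm.sign τ = -(-1) ^ L := by
      apply sign_of_trans L (by omega)
      intro i hi
      have h := hτi i 0
      rw [hi] at h
      have := hc _ _ h
      rw [← hLmul, hg2] at this
      exact (Nat.mul_dvd_mul_iff_left (by norm_num)).1 this
    have : Perm.sign τ = - Perm.sign A := by
      show Perm.sign (Q⁻¹ * (A ^ s.val * P)) = _
      rw [Perm.sign_mul, Perm.sign_mul, Perm.sign_inv, map_pow, sP, sQ]
      rw [Int.units_pow_eq_pow_mod_two, Nat.odd_iff.1 hsodd]; simp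
    rw [sτ, sA] at this
    rcases neg_one_pow_eq_or ℤˣ L with h | h <;> rw [h] at this <;> revert this <;> decide
  · -- four-cycle case
    have hone_m : (1 : ZMod m) ≠ 0 := by
      have : Fact (1 < m) := ⟨by omega⟩
      exact one_ne_zero
    have hone_n : (1 : ZMod n) ≠ 0 := by
      have : Fact (1 < n) := ⟨by omega⟩
      exact one_ne_zero
    have h3 : σ (-e2) = e1 - e2 := by
      have a1 : -e2 ≠ 0 := by
        rw [he2]; intro h; have := congrArg Prod.snd h; simp [hone_n] at this
      have a2 : σ (-e2) ≠ 0 := by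
        intro h; rw [← h10] at h
        have := σ.injective h
        rw [he1, he2] at this
        have := congrArg Prod.fst this; simp at this; exact hone_m this.symm
      rcases (hE (-e2)).1 a1 a2 with h | h
      · rw [h]; abel
      · exact absurd (by rw [h]; abel) a2
    have h4 : σ (e1 - e2) = e1 := by
      rw [← Equiv.eq_symm_apply]
      have a1 : e1 ≠ 0 := by
        rw [he1]; intro h; have := congrArg Prod.fst h; simp [hone_m] at this
      have a2 : σ.symm e1 ≠ 0 := by
        intro h
        rw [Equiv.symm_apply_eq, hz, he1, he2] at h
        have := congrArg Prod.fst h; simp at this; exact hone_m this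
      have := (hE (σ.symm e1)).1 a2
      rw [Equiv.apply_symm_apply] at this
      rcases this a1 with h | h
      · exact absurd (by simpa using h) a2
      · rw [eq_sub_of_add_eq h.symm]
    have := hc 0 4 (by
      show σ (σ (σ (σ 0))) = 0
      rw [hz, h3, h4, h10])
    have := Nat.le_of_dvd (by norm_num) this
    nlinarith

theorem pushed_swap {m n : ℕ} {u v : ZMod m × ZMod n} (h : pushedEdge m n 0 u v) :
    pushedEdge n m 0 u.swap v.swap := by
  obtain ⟨a, b⟩ := u
  obtain ⟨c, d⟩ := v
  simp only [pushedEdge, cpEdge, Prod.swap, Prod.ext_iff, Prod.fst_add, Prod.snd_add,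
    Prod.fst_zero, Prod.snd_zero, ne_eq] at h ⊢
  tauto

theorem main_not (m n : ℕ) (hm : 3 ≤ m) (hn : 3 ≤ n) (hg : Nat.gcd m n ≠ 1)
    (σ : Perm (ZMod m × ZMod n)) (hσ : ∀ u, pushedEdge m n 0 u (σ u))
    (hc : ∀ u, ∀ i : ℕ, (σ ^ i) u = u → m * n ∣ i) : False := by
  have h := (edge_cases (hσ (σ.symm 0))).2.2 (by simp)
  rcases h with h | h
  · exact main_aux m n hm hn hg σ hσ hc (by rw [← h]; simp)
  · let F : Perm (ZMod n × ZMod m) :=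
      (Equiv.prodComm _ _).trans (σ.trans (Equiv.prodComm _ _))
    have hF : ∀ u, F u = (σ u.swap).swap := fun u => rfl
    have hFi : ∀ i : ℕ, ∀ u, (F ^ i) u = ((σ ^ i) u.swap).swap := by
      intro i
      induction i with
      | zero => simp
      | succ i ih =>
        intro u
        rw [pow_succ', Perm.mul_apply, ih, hF, Prod.swap_swap, pow_succ', Perm.mul_apply]
    refine main_aux n m hn hm (by rwa [Nat.gcd_comm]) F (fun u => ?_) (fun u i hu => ?_) ?_
    · rw [hF]; simpa using pushed_swap (hσ u.swap)
    · rw [mul_comm]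
      apply hc u.swap i
      rw [hFi] at hu
      conv_rhs => rw [← hu, Prod.swap_swap]
    · rw [hF]
      show (σ (0, 1)).swap = 0
      rw [← h]; simp

theorem ham_pushed_zero (m n : ℕ) (N : ℕ)
    (h : HamOn (pushedEdge m n (1, 1)) Set.univ N) : HamOn (pushedEdge m n 0) Set.univ N := by
  obtain ⟨f, hi, hr, hE⟩ := h
  refine ⟨fun i => f i - (1, 1), fun a b hab => hi (sub_left_injective hab), ?_, fun i => ?_⟩
  · rw [Set.range_eq_univ] at hr ⊢
    intro y
    obtain ⟨a, ha⟩ := hr (y + (1, 1))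
    exact ⟨a, by simp [ha]⟩
  · have := hE i
    unfold pushedEdge cpEdge at this ⊢
    simp only [ne_eq, sub_eq_zero, sub_add_eq_add_sub, sub_left_inj]
    exact this

theorem cp_not (m n : ℕ) (hm : 3 ≤ m) (hn : 3 ≤ n) (hg : Nat.gcd m n = 1)
    (σ : Perm (ZMod m × ZMod n)) (hσ : ∀ u, cpEdge m n u (σ u))
    (hc : ∀ u, ∀ i : ℕ, (σ ^ i) u = u → m * n ∣ i) : False := by
  have : NeZero m := ⟨by omega⟩
  have : NeZero n := ⟨by omega⟩
  have h10 : ((1, 0) : ZMod m × ZMod n) ≠ (0, 1) := by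
    intro h
    have : Fact (1 < m) := ⟨by omega⟩
    exact one_ne_zero (congrArg Prod.fst h)
  have hsurj : ∀ u : ZMod m × ZMod n, ∃ k : ℕ, u = k • ((1, -1) : ZMod m × ZMod n) := by
    rintro ⟨a, b⟩
    obtain ⟨c, h1, h2⟩ := Nat.chineseRemainder (n := m) (m := n) hg a.val (-b).val
    refine ⟨c, ?_⟩
    have h1 := (ZMod.natCast_eq_natCast_iff _ _ _).2 h1
    have h2 := (ZMod.natCast_eq_natCast_iff _ _ _).2 h2
    rw [ZMod.natCast_zmod_val] at h1 h2
    ext <;> simp [h1, h2]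
  have hstep : ∀ u, σ u = u + (1, 0) → σ (u + (1, -1)) = u + (1, -1) + (1, 0) := by
    intro u hu
    rcases hσ (u + (1, -1)) with h | h
    · exact h
    · exfalso
      have h3 : σ (u + (1, -1)) = σ u := by
        rw [h, hu, add_assoc]; congr 1; ext <;> simp
      have h4 := σ.injective h3
      rw [add_eq_left] at h4
      have : Fact (1 < m) := ⟨by omega⟩
      exact one_ne_zero (congrArg Prod.fst h4)
  have hpow : ∀ v, (∀ u, σ u = u + v) → ∀ i : ℕ, ∀ u, (σ ^ i) u = u + i • v := by
    intro v hv i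
    induction i with
    | zero => simp
    | succ i ih =>
      intro u
      rw [pow_succ', Perm.mul_apply, ih, hv, succ_nsmul, add_assoc]
  have hfrom : ∀ u, σ u = u + (1, 0) → ∀ w, σ w = w + (1, 0) := by
    intro u hu w
    obtain ⟨k, hk⟩ := hsurj (w - u)
    have : ∀ k : ℕ, σ (u + k • (1, -1)) = u + k • (1, -1) + (1, 0) := by
      intro k
      induction k with
      | zero => simpa using hu
      | succ k ih => rw [succ_nsmul, ← add_assoc]; exact hstep _ ih
    have h := this k
    rw [← hk] at h
    simpa using h
  by_cases hex : ∃ u, σ u = u + (1, 0)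
  · obtain ⟨u, hu⟩ := hex
    have h := hpow _ (hfrom u hu) m 0
    have := Nat.le_of_dvd (by omega) (hc 0 m (by rw [h]; ext <;> simp))
    nlinarith
  · have hall : ∀ u, σ u = u + (0, 1) := fun u =>
      (hσ u).resolve_left (fun h => hex ⟨u, h⟩)
    have h := hpow _ hall n 0
    have := Nat.le_of_dvd (by omega) (hc 0 n (by rw [h]; ext <;> simp))
    nlinarith

/-- For `m, n ≥ 3`: if `gcd(m,n) ≠ 1` then `P(C⃗_m □ C⃗_n)` is not hamiltonian;
in particular, if `C⃗_m □ C⃗_n` is hamiltonian then `P(C⃗_m □ C⃗_n)` is not. -/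
theorem stmt_18 (m n : ℕ) (hm : 3 ≤ m) (hn : 3 ≤ n) :
    (Nat.gcd m n ≠ 1 → ¬ HamOn (pushedEdge m n (1, 1)) Set.univ (m * n)) ∧
    (HamOn (cpEdge m n) Set.univ (m * n) →
      ¬ HamOn (pushedEdge m n (1, 1)) Set.univ (m * n)) := by
  have main : Nat.gcd m n ≠ 1 → ¬ HamOn (pushedEdge m n (1, 1)) Set.univ (m * n) := by
    intro hg h
    obtain ⟨σ, hσ, hc⟩ := ham_perm _ _ (ham_pushed_zero m n _ h)
    exact main_not m n hm hn hg σ hσ hc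
  refine ⟨main, fun h => main fun hg => ?_⟩
  obtain ⟨σ, hσ, hc⟩ := ham_perm _ _ h
  exact cp_not m n hm hn hg σ hσ hc
end
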